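/- Let X = Spec(B) be given by a local presentation attached to the multiplicity as in the context, with elimination algebra G_X^{(d)} over S. Let ψ̄ : S → K[[t]] be a diagonal arc, i.e. a k-algebra homomorphism with ψ̄(z_j) = u_j t^α for units u_j ∈ K[[t]] and a positive integer α, which is diagonal-generic for G_X^{(d)}, i.e. ord(ψ̄(G_X^{(d)})) = α · ord(G_X^{(d)}). Then there exist a field extension K′ of k and a nonzero k-algebra homomorphism φ : B → K′[[t]] sending the maximal ideal of B into (t) whose restriction φ^{(d)} to S satisfies ker(φ^{(d)}) = ker(ψ̄); moreover φ^{(d)} is again a diagonal arc (φ^{(d)}(z_j) = u_j g′(t) for a common g′ ∈ K′[[t]] of positive order) and is diagonal-generic for G_X^{(d)}, i.e. ord(φ^{(d)}(G_X^{(d)})) = ord(φ^{(d)}) · ord(G_X^{(d)}). -/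

import Mathlib

open Polynomial
open scoped ENNReal

noncomputable section

namespace NashMult

/-- The `m`-adic order `ν(f)` of an element `f` of a ring: the largest `n` with `f ∈ m ^ n`. -/
def adicOrder {R : Type*} [CommRing R] (m : Ideal R) (f : R) : ℕ :=
  sSup {n : ℕ | f ∈ m ^ n}

/-- A subalgebra `G ⊆ R[W]` is *graded* if it is spanned by its "monomials", i.e. it is closed
under taking homogeneous components.  This is the condition expressing that `G = ⊕ I_l W^l`
for a family of ideals `I_l` (with `I_0 = R` and `I_i · I_j ⊆ I_{i+j}` automatic). -/
def Graded {R : Type*} [CommRing R] (G : Subalgebra R (Polynomial R)) : Prop :=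
  ∀ p ∈ G, ∀ n : ℕ, (C (p.coeff n) * X ^ n : Polynomial R) ∈ G

/-- A *Rees algebra* over `R`: a finitely generated graded subalgebra of `R[W]`. -/
def IsReesAlgebra {R : Type*} [CommRing R] (G : Subalgebra R (Polynomial R)) : Prop :=
  G.FG ∧ Graded G

/-- The order of (the Rees algebra) `G` at the closed point of the local ring `(R, m)`:
`ord(G) = inf { ν(f)/n : f W^n a homogeneous element of G, n ≥ 1, f ≠ 0 }`
(with value `∞` for the empty infimum). -/
def reesOrder {R : Type*} [CommRing R] (m : Ideal R) (G : Subalgebra R (Polynomial R)) : ℝ≥0∞ :=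
  sInf {q : ℝ≥0∞ | ∃ (f : R) (n : ℕ), f ≠ 0 ∧ 1 ≤ n ∧ (C f * X ^ n : Polynomial R) ∈ G ∧
    q = (adicOrder m f : ℝ≥0∞) / (n : ℝ≥0∞)}

/-- `G = ⊕ I_l W^l` is *differentially closed* relative to a family `D` of derivations if
`I_{l+1} ⊆ I_l` and `D_j (I_l) ⊆ I_{l-1}` for all `l ≥ 1` and all `j`. -/
def DiffClosed {k R ι : Type*} [CommRing k] [CommRing R] [Algebra k R]
    (D : ι → Derivation k R R) (G : Subalgebra R (Polynomial R)) : Prop :=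
  (∀ (f : R) (l : ℕ), 1 ≤ l → (C f * X ^ (l + 1) : Polynomial R) ∈ G →
      (C f * X ^ l : Polynomial R) ∈ G) ∧
  (∀ (f : R) (l : ℕ) (j : ι), (C f * X ^ (l + 1) : Polynomial R) ∈ G →
      (C (D j f) * X ^ l : Polynomial R) ∈ G)

/-- `Diff(M)`: the smallest graded differentially closed subalgebra of `R[W]` containing the
set `M`. -/
def diffClosure {k R ι : Type*} [CommRing k] [CommRing R] [Algebra k R]
    (D : ι → Derivation k R R) (M : Set (Polynomial R)) : Subalgebra R (Polynomial R) :=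
  sInf {G : Subalgebra R (Polynomial R) | M ⊆ ↑G ∧ Graded G ∧ DiffClosed D G}

/-- The image `ψ(G)` of a Rees algebra `G` over `R` under a homomorphism (arc) `ψ : R → K⟦t⟧`:
the Rees algebra over `K⟦t⟧` generated by all `ψ(g) W^l` for `g W^l` a homogeneous element of
`G` with `ψ(g) ≠ 0`. -/
def arcImage {R A : Type*} [CommRing R] [CommRing A] (ψ : R → A)
    (G : Subalgebra R (Polynomial R)) : Subalgebra A (Polynomial A) :=
  Algebra.adjoin A {p : Polynomial A | ∃ (g : R) (l : ℕ),
    (C g * X ^ l : Polynomial R) ∈ G ∧ ψ g ≠ 0 ∧ p = C (ψ g) * X ^ l}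

/-- The order `ord(ψ)` of an arc `ψ : R → K⟦t⟧`: the largest `n` such that
`ψ(m) ⊆ t^n` (`t` being the ideal `tI`). -/
def homOrd {R A : Type*} [CommRing R] [CommRing A] (m : Ideal R) (tI : Ideal A)
    (ψ : R → A) : ℕ :=
  sSup {n : ℕ | ∀ s ∈ m, ψ s ∈ tI ^ n}

/-- The maximal ideal `(t)` of `K⟦t⟧`. -/
def tId (K : Type*) [CommRing K] : Ideal (PowerSeries K) :=
  Ideal.span {(PowerSeries.X : PowerSeries K)}

/-- The `t`-adic order on `K⟦t⟧`. -/
def tOrd {K : Type*} [CommRing K] (g : PowerSeries K) : ℕ :=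
  adicOrder (tId K) g

/-- The family of ideals `I_l` of the graded algebra `G = ⊕ I_l W^l`. -/
def idealFam {R : Type*} [CommRing R] (G : Subalgebra R (Polynomial R)) (l : ℕ) : Ideal R :=
  Submodule.comap (Polynomial.monomial l : R →ₗ[R] Polynomial R) (Subalgebra.toSubmodule G)

/-- The closed point of the local ring `(R, m)` belongs to the singular locus of
`G = ⊕ I_l W^l`, i.e. `ν(I_l) ≥ l` for all `l ≥ 1`. -/
def SingFam {R : Type*} [CommRing R] (m : Ideal R) (I : ℕ → Ideal R) : Prop :=
  ∀ l : ℕ, 1 ≤ l → I l ≤ m ^ l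

/-- The transform `⊕ (I_l · T^{-l}) W^l` of a Rees algebra `⊕ I_l W^l` over a DVR with
uniformizer `T` (when the closed point lies in the singular locus, `I_l ⊆ (T^l)` and
`I_l · T^{-l} = (I_l : (T^l))`). -/
def transformFam {R : Type*} [CommRing R] (T : R) (I : ℕ → Ideal R) : ℕ → Ideal R :=
  fun l => (I l).colon (Ideal.span {T ^ l})

/-- The persistance: the least number `κ` of transforms needed so that the closed point no
longer lies in the singular locus. -/
def persist {R : Type*} [CommRing R] (m : Ideal R) (T : R)
    (G : Subalgebra R (Polynomial R)) : ℕ :=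
  sInf {κ : ℕ | ¬ SingFam m ((transformFam T)^[κ] (idealFam G))}

/-- The set of elements of a ring integral over a subset `s` (monic equation with
coefficients in `s`). -/
def intClos {A : Type*} [CommRing A] (s : Set A) : Set A :=
  {p : A | ∃ q : Polynomial A, q.Monic ∧ (∀ n, q.coeff n ∈ s) ∧ Polynomial.eval p q = 0}


/-- The monic polynomial `f = x^b + B_{b-2} x^{b-2} + ⋯ + B_1 x + B_0` with coefficients
`B_j = Bc j` (only `j ≤ b - 2` is relevant). -/
def minPolyOf {S : Type*} [CommRing S] (b : ℕ) (Bc : ℕ → S) : Polynomial S :=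
  Polynomial.X ^ b + ∑ j ∈ Finset.range (b - 1), Polynomial.C (Bc j) * Polynomial.X ^ j


/-- The maximal ideal `(z_1, …, z_d)` of the polynomial ring `k[z_1, …, z_d]`
(the kernel of evaluation at the origin). -/
def mPoly (k : Type) [Field k] (d : ℕ) : Ideal (MvPolynomial (Fin d) k) :=
  RingHom.ker (MvPolynomial.aeval (fun _ => (0 : k)) : MvPolynomial (Fin d) k →ₐ[k] k)

instance {k : Type} [Field k] {d : ℕ} : (mPoly k d).IsMaximal :=
  RingHom.ker_isMaximal_of_surjective _ (fun a => ⟨MvPolynomial.C a, by simp⟩)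

instance {k : Type} [Field k] {d : ℕ} : (mPoly k d).IsPrime :=
  (inferInstance : (mPoly k d).IsMaximal).isPrime

/-- `IsSLoc k d S` says that `S` is (identified with) the localization of `k[z_1, …, z_d]`
at the maximal ideal `(z_1, …, z_d)`. -/
abbrev IsSLoc (k : Type) [Field k] (d : ℕ) (S : Type) [CommRing S]
    [Algebra (MvPolynomial (Fin d) k) S] : Prop :=
  IsLocalization.AtPrime S (mPoly k d)

/-- The element `z_j` of `S`. -/
def zvar (k : Type) [Field k] (d : ℕ) (S : Type) [CommRing S]
    [Algebra (MvPolynomial (Fin d) k) S] (j : Fin d) : S :=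
  algebraMap (MvPolynomial (Fin d) k) S (MvPolynomial.X j)

/-- The maximal ideal `m = (z_1, …, z_d)` of the local ring `S`. -/
def mS (k : Type) [Field k] (d : ℕ) (S : Type) [CommRing S]
    [Algebra (MvPolynomial (Fin d) k) S] : Ideal S :=
  (mPoly k d).map (algebraMap (MvPolynomial (Fin d) k) S)


variable (k : Type) [Field k] (d : ℕ)
variable (S : Type) [CommRing S] [Algebra (MvPolynomial (Fin d) k) S] [Algebra k S]

/-- A local presentation, attached to the multiplicity, of a `d`-dimensional variety
`X = Spec B` at the closed point `ξ`:  `B = S[x_1,…,x_{n-d}]/I` with `I` prime,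
`S → B` injective and finite, and the minimal polynomial over `Frac S` of the class `θ_i`
of `x_i` is `f_i = x_i^{b_i} + B_{i,b_i-2} x_i^{b_i-2} + ⋯ + B_{i,0}` with `b_i ≥ 2`,
`B_{i,j} ∈ m^{b_i - j}`, and some `B_{i,j} ≠ 0`. -/
structure Presentation [IsDomain S] : Type 1 where
  /-- the number `n - d ≥ 1` of extra variables `x_i` -/
  e : ℕ
  he : 1 ≤ e
  /-- the prime ideal `I ⊆ S[x_1,…,x_{n-d}]` defining `X` -/
  I : Ideal (MvPolynomial (Fin e) S)
  hprime : I.IsPrime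
  hinj : Function.Injective (algebraMap S (MvPolynomial (Fin e) S ⧸ I))
  hfinite : Module.Finite S (MvPolynomial (Fin e) S ⧸ I)
  /-- the degrees `b_i ≥ 2` -/
  b : Fin e → ℕ
  hb : ∀ i, 2 ≤ b i
  /-- the coefficients `B_{i,j}` (only `j ≤ b_i - 2` is relevant) -/
  Bc : Fin e → ℕ → S
  /-- `f_i(θ_i) = 0` -/
  hroot : ∀ i, Polynomial.aeval (Ideal.Quotient.mk I (MvPolynomial.X i))
    (minPolyOf (b i) (Bc i)) = 0
  /-- `f_i` is irreducible over `Frac S`, i.e. it is the minimal polynomial of `θ_i` -/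
  hirr : ∀ i, Irreducible ((minPolyOf (b i) (Bc i)).map (algebraMap S (FractionRing S)))
  /-- `B_{i,j} ∈ m^{b_i - j}` -/
  hmem : ∀ i, ∀ j ≤ b i - 2, Bc i j ∈ (mS k d S) ^ (b i - j)
  /-- some `B_{i,j} ≠ 0` -/
  hnz : ∃ i, ∃ j ≤ b i - 2, Bc i j ≠ 0

variable [IsDomain S]
variable {k d S}

/-- The coordinate ring `B = S[x_1,…,x_{n-d}]/I` of `X`. -/
abbrev BRing (P : Presentation k d S) : Type :=
  MvPolynomial (Fin P.e) S ⧸ P.I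

/-- The class `θ_i` of `x_i` in `B`. -/
def theta (P : Presentation k d S) (i : Fin P.e) : BRing P :=
  Ideal.Quotient.mk P.I (MvPolynomial.X i)

/-- The elimination algebra in dimension `d`:
`G_X^{(d)} = Diff( S[ B_{i,j} W^{b_i - j} : i, j ] )`, a Rees algebra over `S`. -/
def elimAlg (P : Presentation k d S) (D : Fin d → Derivation k S S) :
    Subalgebra S (Polynomial S) :=
  diffClosure D {p : Polynomial S | ∃ i, ∃ j ≤ P.b i - 2,
    p = Polynomial.C (P.Bc i j) * Polynomial.X ^ (P.b i - j)}

/-- An arc in `X` through `ξ` (with the required nonvanishing): a `k`-algebra homomorphism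
`φ : B → K⟦t⟧` sending the maximal ideal of `B` at `ξ` into `(t)`, with all `φ(θ_i)` and
`φ(z_j)` nonzero. -/
def IsArc (P : Presentation k d S) {K : Type} [Field K] [Algebra k K]
    (φ : BRing P →ₐ[k] PowerSeries K) : Prop :=
  (∀ s ∈ mS k d S, φ (algebraMap S (BRing P) s) ∈ tId K) ∧
  (∀ i, φ (theta P i) ∈ tId K) ∧
  (∀ i, φ (theta P i) ≠ 0) ∧
  (∀ j, φ (algebraMap S (BRing P) (zvar k d S j)) ≠ 0)

/-- The order of an arc: the minimum of the `t`-adic orders of the `φ(θ_i)` and the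
`φ(z_j)`. -/
def arcOrd (P : Presentation k d S) {K : Type} [Field K] [Algebra k K]
    (φ : BRing P →ₐ[k] PowerSeries K) : ℕ :=
  sInf ((Set.range fun i => tOrd (φ (theta P i))) ∪
    (Set.range fun j => tOrd (φ (algebraMap S (BRing P) (zvar k d S j)))))

/-- The contact algebra `G^{(1)}_{X_0,φ}`: the Rees algebra over `K⟦t⟧` generated by the
`φ(θ_i) W` together with all `φ(g) W^l` for `g W^l` a homogeneous element of `G_X^{(d)}`
with `φ(g) ≠ 0`. -/
def contactAlg (P : Presentation k d S) (D : Fin d → Derivation k S S)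
    {K : Type} [Field K] [Algebra k K] (φ : BRing P →ₐ[k] PowerSeries K) :
    Subalgebra (PowerSeries K) (Polynomial (PowerSeries K)) :=
  Algebra.adjoin (PowerSeries K)
    ((Set.range fun i => (Polynomial.C (φ (theta P i)) * Polynomial.X :
        Polynomial (PowerSeries K))) ∪
      {p : Polynomial (PowerSeries K) | ∃ (g : S) (l : ℕ),
        (Polynomial.C g * Polynomial.X ^ l : Polynomial S) ∈ elimAlg P D ∧
        φ (algebraMap S (BRing P) g) ≠ 0 ∧
        p = Polynomial.C (φ (algebraMap S (BRing P) g)) * Polynomial.X ^ l})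

/-- The order of contact `r_{X,φ}` of the arc `φ` with `Max mult(X)`: the order of the
contact algebra at the closed point of `K⟦t⟧`. -/
def rOrd (P : Presentation k d S) (D : Fin d → Derivation k S S)
    {K : Type} [Field K] [Algebra k K] (φ : BRing P →ₐ[k] PowerSeries K) : ℝ≥0∞ :=
  reesOrder (tId K) (contactAlg P D φ)

/-- The persistance `ρ_{X,φ}`: the least number of transforms of the contact algebra
(i.e. of point blow-ups directed by `φ`) needed to make the closed point leave the
singular locus, that is, to lower the Nash multiplicity. -/
def rho (P : Presentation k d S) (D : Fin d → Derivation k S S)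
    {K : Type} [Field K] [Algebra k K] (φ : BRing P →ₐ[k] PowerSeries K) : ℕ :=
  persist (tId K) (PowerSeries.X : PowerSeries K) (contactAlg P D φ)


/-!
Lift `ψ` along the finite extension `S → B` to an algebraic closure of the fraction field of
`K'⟦t⟧`, where `K'` is an algebraic closure of `K`: this is lying over. The values of the lift
generate a finite extension domain of `K'⟦t⟧`. Its normalization, localized at a maximal ideal,
is a discrete valuation ring with residue field `K'`, and expanding in a uniformizer embeds it
into a power series ring `K'⟦t⟧`. The arc `φ` obtained in this way restricts to `S` as `ψ`
followed by an embedding of power series rings, which multiplies all `t`-adic orders by one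
positive integer `e`. Hence the kernel and the diagonal shape persist, and both sides of the
genericity equation are multiplied by `e`.
-/

section Development

open IsLocalRing
open scoped PowerSeries TensorProduct nonZeroDivisors

section Expansion

variable {K R : Type*} [CommRing K] [CommRing R] [Algebra K R]

/-- The power series expansion `a = ∑ c(qⁿ a) ϖⁿ` of the elements of a `K`-algebra with respect to
a parameter `ϖ`, where `c a` is the residue of `a` modulo `ϖ` and `q a = (a - c a) / ϖ`. The
parameter enters only through `c` and `q`. -/
def expansion (c : R →ₐ[K] K) (q : R →ₗ[K] R) : R →ₗ[K] K⟦X⟧ where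
  toFun a := PowerSeries.mk fun n => c ((q ^ n) a)
  map_add' a b := by ext n; simp
  map_smul' x a := by ext n; simp

theorem expansion_eq_C_add_X_mul (c : R →ₐ[K] K) (q : R →ₗ[K] R) (a : R) :
    expansion c q a = PowerSeries.C (c a) + PowerSeries.X * expansion c q (q a) := by
  ext n
  cases n with
  | zero => simp [expansion]
  | succ n => simp [expansion, PowerSeries.coeff_succ_X_mul, pow_succ]

theorem expansion_mul {c : R →ₐ[K] K} {q : R →ₗ[K] R}
    (hq : ∀ a b, q (a * b) = q a * b + c a • q b) (a b : R) :
    expansion c q (a * b) = expansion c q a * expansion c q b := by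
  have defect_eq (a b : R) : expansion c q (a * b) - expansion c q a * expansion c q b =
      PowerSeries.X * (expansion c q (q a * b) - expansion c q (q a) * expansion c q b) := by
    rw [expansion_eq_C_add_X_mul c q (a * b), hq, map_add, map_smul, map_mul,
      expansion_eq_C_add_X_mul c q a, expansion_eq_C_add_X_mul c q b, map_mul,
      PowerSeries.smul_eq_C_mul]
    ring
  have coeff_defect (n : ℕ) : ∀ a b, PowerSeries.coeff n
      (expansion c q (a * b) - expansion c q a * expansion c q b) = 0 := by
    induction n with
    | zero => intro a b; simp [defect_eq a b]
    | succ n ih => intro a b; rw [defect_eq, PowerSeries.coeff_succ_X_mul, ih]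
  rw [← sub_eq_zero]
  ext n
  exact coeff_defect n a b

theorem exists_eq_residue_add_mul {ϖ : R} (hϖ : ϖ ∈ R⁰)
    (hres : Function.Bijective (algebraMap K (R ⧸ Ideal.span {ϖ}))) :
    ∃ (c : R →ₐ[K] K) (q : R →ₗ[K] R), ∀ a, a = algebraMap K R (c a) + ϖ * q a := by
  let e := AlgEquiv.ofBijective (Algebra.ofId K (R ⧸ Ideal.span {ϖ})) hres
  let c : R →ₐ[K] K := e.symm.toAlgHom.comp (Ideal.Quotient.mkₐ K _)
  have dvd_sub (a : R) : ϖ ∣ a - algebraMap K R (c a) :=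
    Ideal.mem_span_singleton.1 <| Ideal.Quotient.eq.1
      (e.apply_symm_apply (Ideal.Quotient.mk _ a)).symm
  choose q hq using dvd_sub
  have cancel {x y : R} : ϖ * x = ϖ * y → x = y := (mul_cancel_left_mem_nonZeroDivisors hϖ).1
  refine ⟨c, { toFun := q, map_add' := fun a b => cancel ?_, map_smul' := fun x a => cancel ?_ },
    fun a => eq_add_of_sub_eq' (hq a)⟩
  · rw [mul_add, ← hq, ← hq, ← hq, map_add, map_add]
    ring
  · rw [RingHom.id_apply, mul_smul_comm, ← hq, ← hq, map_smul, smul_sub, smul_eq_mul, map_mul,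
      Algebra.smul_def x (algebraMap K R _)]

theorem exists_algHom_powerSeries_eq_X {ϖ : R} (hϖ : ϖ ∈ R⁰)
    (hres : Function.Bijective (algebraMap K (R ⧸ Ideal.span {ϖ}))) :
    ∃ E : R →ₐ[K] K⟦X⟧, E ϖ = PowerSeries.X := by
  obtain ⟨c, q, hcq⟩ := exists_eq_residue_add_mul hϖ hres
  have cancel {x y : R} : ϖ * x = ϖ * y → x = y := (mul_cancel_left_mem_nonZeroDivisors hϖ).1
  have q_mul (a b : R) : q (a * b) = q a * b + c a • q b := cancel <| by
    have hab := hcq (a * b)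
    rw [map_mul, map_mul] at hab
    rw [Algebra.smul_def]
    linear_combination b * hcq a + algebraMap K R (c a) * hcq b - hab
  have q_one : q 1 = 0 := by simpa using q_mul 1 1
  have c_param : c ϖ = 0 := hres.injective <| by
    rw [map_zero, IsScalarTower.algebraMap_apply K R, Ideal.Quotient.algebraMap_eq,
      Ideal.Quotient.eq_zero_iff_dvd]
    exact ⟨1 - q ϖ, by linear_combination -hcq ϖ⟩
  have q_param : q ϖ = 1 := cancel <| by simpa [c_param] using (hcq ϖ).symm
  have expansion_one : expansion c q 1 = 1 := by
    rw [expansion_eq_C_add_X_mul, q_one, map_zero, mul_zero, add_zero, map_one, map_one]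
  refine ⟨AlgHom.ofLinearMap (expansion c q) expansion_one (expansion_mul q_mul), ?_⟩
  rw [AlgHom.ofLinearMap_apply, expansion_eq_C_add_X_mul, c_param, q_param, expansion_one,
    map_zero, zero_add, mul_one]

end Expansion

section Embedding

variable {K : Type*} [Field K]

theorem exists_injective_algHom_of_isDiscreteValuationRing {R : Type*} [CommRing R] [IsDomain R]
    [IsDiscreteValuationRing R] [Algebra K R]
    (hres : Function.Bijective (algebraMap K (ResidueField R))) :
    ∃ E : R →ₐ[K] K⟦X⟧, Function.Injective E := by
  obtain ⟨ϖ, hϖ⟩ := IsDiscreteValuationRing.exists_irreducible R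
  obtain ⟨E, hE⟩ := exists_algHom_powerSeries_eq_X (K := K)
    (mem_nonZeroDivisors_of_ne_zero hϖ.ne_zero) (hϖ.maximalIdeal_eq ▸ hres)
  refine ⟨E, (RingHom.injective_iff_ker_eq_bot E).2 (by_contra fun hker => ?_)⟩
  have ker_eq : RingHom.ker E = maximalIdeal R :=
    eq_maximalIdeal ((RingHom.ker_isPrime (E : R →+* K⟦X⟧)).isMaximal hker)
  have hϖ_ker : ϖ ∈ RingHom.ker E := ker_eq ▸ hϖ.not_isUnit
  exact PowerSeries.X_ne_zero (hE.symm.trans hϖ_ker)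

variable [IsAlgClosed K]

theorem bijective_algebraMap_quotient_of_isIntegral (A : Type*) [CommRing A] [IsLocalRing A]
    [Algebra K A] [Algebra.IsIntegral K (ResidueField A)] {C : Type*} [CommRing C] [Algebra A C]
    [Algebra K C] [IsScalarTower K A C] [Algebra.IsIntegral A C] (n : Ideal C) [n.IsMaximal] :
    Function.Bijective (algebraMap K (C ⧸ n)) := by
  have : n.LiesOver (maximalIdeal A) :=
    ⟨(eq_maximalIdeal (Ideal.isMaximal_comap_of_isIntegral_of_isMaximal n)).symm⟩
  have : IsScalarTower K (A ⧸ maximalIdeal A) (C ⧸ n) := .to₁₃₄ K A (A ⧸ maximalIdeal A) (C ⧸ n)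
  have : Algebra.IsIntegral K (A ⧸ maximalIdeal A) := ‹Algebra.IsIntegral K (ResidueField A)›
  have : Algebra.IsIntegral K (C ⧸ n) := .trans (A ⧸ maximalIdeal A)
  exact IsAlgClosed.algebraMap_bijective_of_isIntegral

variable (K) (A : Type*) [CommRing A] [IsDomain A] [IsDiscreteValuationRing A] [Algebra K A]
  [Algebra.IsIntegral K (ResidueField A)]

theorem exists_injective_algHom_of_isDedekindDomain (C : Type*) [CommRing C] [IsDedekindDomain C]
    [Algebra A C] [Algebra.IsIntegral A C] [FaithfulSMul A C] [Algebra K C]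
    [IsScalarTower K A C] :
    ∃ E : C →ₐ[K] K⟦X⟧, Function.Injective E := by
  obtain ⟨n, hn⟩ := Ideal.exists_maximal C
  have n_ne_bot : n ≠ ⊥ := by
    rintro rfl
    exact IsDiscreteValuationRing.not_isField A <|
      isField_of_isIntegral_of_isField (FaithfulSMul.algebraMap_injective A C)
        (Ring.isField_iff_maximal_bot.2 hn)
  have : IsDiscreteValuationRing (Localization.AtPrime n) :=
    IsLocalization.AtPrime.isDiscreteValuationRing_of_dedekind_domain C n_ne_bot _
  have hres : Function.Bijective (algebraMap K (ResidueField (Localization.AtPrime n))) :=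
    (Ideal.bijective_algebraMap_quotient_residueField n).comp
      (bijective_algebraMap_quotient_of_isIntegral A n)
  obtain ⟨E, hE⟩ := exists_injective_algHom_of_isDiscreteValuationRing hres
  exact ⟨E.comp (Algebra.algHom K C (Localization.AtPrime n)),
    hE.comp (IsLocalization.injective _ n.primeCompl_le_nonZeroDivisors)⟩

theorem exists_injective_algHom_of_finite [CharZero K] (C : Type*) [CommRing C] [IsDomain C]
    [Algebra A C] [Module.Finite A C] [FaithfulSMul A C] [Algebra K C] [IsScalarTower K A C] :
    ∃ E : C →ₐ[K] K⟦X⟧, Function.Injective E := by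
  let F := FractionRing A
  let M := FractionRing C
  let _ : Algebra F M := FractionRing.liftAlgebra A M
  have : CharZero F := charZero_of_injective_algebraMap (algebraMap K F).injective
  have : FiniteDimensional F M := .of_isLocalization A C A⁰
  have : IsDedekindDomain (integralClosure A M) := integralClosure.isDedekindDomain A F M
  let toNormalization : C →ₐ[K] integralClosure A M :=
    (IsScalarTower.toAlgHom K C M).codRestrict ((integralClosure A M).restrictScalars K)
      fun c => (Algebra.IsIntegral.isIntegral c).algebraMap
  obtain ⟨E, hE⟩ := exists_injective_algHom_of_isDedekindDomain K A (integralClosure A M)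
  exact ⟨E.comp toNormalization,
    hE.comp fun _ _ h => IsFractionRing.injective C M (congrArg Subtype.val h)⟩

end Embedding

section Lifting

theorem nonempty_algHom_of_isIntegral (S B L : Type*) [CommRing S] [CommRing B] [Algebra S B]
    [Algebra.IsIntegral S B] [FaithfulSMul S B] [Field L] [IsAlgClosed L] [Algebra S L] :
    Nonempty (B →ₐ[S] L) := by
  let p := RingHom.ker (algebraMap S L)
  have : p.IsPrime := RingHom.ker_isPrime (algebraMap S L)
  obtain ⟨Q, hQ, hQp⟩ := Ideal.nonempty_primesOver (S := B) p
  let _ : Algebra (S ⧸ p) L := (RingHom.kerLift (algebraMap S L)).toAlgebra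
  have : IsScalarTower S (S ⧸ p) L := .of_algebraMap_eq fun _ => rfl
  have : Module.IsTorsionFree (S ⧸ p) L :=
    Module.isTorsionFree_iff_algebraMap_injective.2 (RingHom.kerLift_injective (algebraMap S L))
  have : Module.IsTorsionFree (S ⧸ p) (B ⧸ Q) :=
    Module.isTorsionFree_iff_faithfulSMul.2 inferInstance
  let lift : B ⧸ Q →ₐ[S ⧸ p] L := IsAlgClosed.lift
  exact ⟨(lift.restrictScalars S).comp (Ideal.Quotient.mkₐ S Q)⟩

theorem exists_ringHom_lift_to_powerSeries (K : Type*) {A S B : Type*} [Field K] [IsAlgClosed K]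
    [CharZero K] [CommRing A] [IsDomain A] [IsDiscreteValuationRing A] [Algebra K A]
    [Algebra.IsIntegral K (ResidueField A)] [CommRing S] [CommRing B] [Algebra S B]
    [Module.Finite S B] [FaithfulSMul S B] (ψ : S →+* A) :
    ∃ (φ : B →+* K⟦X⟧) (κ : A →ₐ[K] K⟦X⟧),
      Function.Injective κ ∧ ∀ s, φ (algebraMap S B s) = κ (ψ s) := by
  let L := AlgebraicClosure (FractionRing A)
  let _ : Algebra S A := ψ.toAlgebra
  obtain ⟨φL⟩ := nonempty_algHom_of_isIntegral S B L
  let joint : A ⊗[S] B →ₐ[A] L :=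
    Algebra.TensorProduct.lift (Algebra.ofId A L) φL fun _ _ => .all _ _
  have : Module.Finite A joint.range := Module.Finite.range joint.toLinearMap
  have : FaithfulSMul A L := .trans A (FractionRing A) L
  obtain ⟨E, hE⟩ := exists_injective_algHom_of_finite K A joint.range
  let φC : B →ₐ[S] joint.range :=
    φL.codRestrict (joint.range.restrictScalars S) fun b => ⟨1 ⊗ₜ b, by simp [joint]⟩
  exact ⟨(E : joint.range →+* K⟦X⟧).comp φC, E.comp (Algebra.algHom K A joint.range),
    hE.comp (FaithfulSMul.algebraMap_injective A joint.range), fun s => congrArg E (φC.commutes s)⟩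

theorem surjective_algebraMap_residueField_powerSeries (K : Type*) [Field K] :
    Function.Surjective (algebraMap K (ResidueField K⟦X⟧)) := by
  intro x
  obtain ⟨f, rfl⟩ := residue_surjective x
  refine ⟨PowerSeries.constantCoeff f, Ideal.Quotient.eq.2 ?_⟩
  rw [PowerSeries.maximalIdeal_eq_span_X, Ideal.mem_span_singleton, PowerSeries.X_dvd_iff]
  simp

theorem isLocalHom_algHom_powerSeries {K A : Type*} [Field K] [CommRing A] [IsLocalRing A]
    [Algebra K A] (κ : A →ₐ[K] K⟦X⟧) : IsLocalHom κ := by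
  let ε : A →+* K := PowerSeries.constantCoeff.comp (κ : A →+* K⟦X⟧)
  have ε_surjective : Function.Surjective ε := fun x => ⟨algebraMap K A x, by simp [ε]⟩
  have ker_ε : RingHom.ker ε = maximalIdeal A :=
    eq_maximalIdeal (RingHom.ker_isMaximal_of_surjective ε ε_surjective)
  refine ⟨fun a ha => by_contra fun hna => ?_⟩
  have ε_eq_zero : a ∈ RingHom.ker ε := ker_ε ▸ hna
  exact (PowerSeries.isUnit_constantCoeff _ ha).ne_zero ε_eq_zero

end Lifting

section Order

theorem order_eq_zero_iff_isUnit {K : Type*} [Field K] {f : K⟦X⟧} : f.order = 0 ↔ IsUnit f := by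
  rw [← not_iff_not, ← ne_eq, PowerSeries.order_ne_zero_iff_constCoeff_eq_zero,
    PowerSeries.isUnit_iff_constantCoeff, isUnit_iff_ne_zero, not_not]

theorem order_mul_X_pow {K : Type*} [Field K] {u : K⟦X⟧} (hu : IsUnit u) (n : ℕ) :
    (u * PowerSeries.X ^ n).order = (n : ℕ∞) := by
  rw [PowerSeries.order_mul, order_eq_zero_iff_isUnit.2 hu, PowerSeries.order_X_pow, zero_add]

theorem exists_isUnit_mul_X_pow_of_order_eq {K : Type*} [Field K] {f : K⟦X⟧} {n : ℕ}
    (hf : f.order = n) : ∃ u, IsUnit u ∧ f = u * PowerSeries.X ^ n := by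
  have f_ne_zero : f ≠ 0 := by
    rintro rfl
    exact ENat.top_ne_natCast n (PowerSeries.order_zero.symm.trans hf)
  obtain ⟨m, v, hv⟩ := IsDiscreteValuationRing.eq_unit_mul_pow_irreducible f_ne_zero
    (PowerSeries.X_prime (R := K)).irreducible
  have hmn : m = n := by exact_mod_cast (order_mul_X_pow v.isUnit m).symm.trans (hv ▸ hf)
  exact ⟨v, v.isUnit, hmn ▸ hv⟩

theorem order_map_powerSeries {K K' : Type*} [Field K] [Field K'] (κ : K⟦X⟧ →+* K'⟦X⟧)
    (hκ : (κ PowerSeries.X).order ≠ 0) (f : K⟦X⟧) :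
    (κ f).order = (κ PowerSeries.X).order * f.order := by
  rcases eq_or_ne f 0 with rfl | hf
  · rw [map_zero, PowerSeries.order_zero, PowerSeries.order_zero, ENat.mul_top hκ]
  · obtain ⟨n, hn⟩ := ENat.ne_top_iff_exists.1 (mt PowerSeries.order_eq_top.1 hf)
    obtain ⟨v, hv, rfl⟩ := exists_isUnit_mul_X_pow_of_order_eq hn.symm
    rw [← hn, map_mul, map_pow, PowerSeries.order_mul, PowerSeries.order_pow,
      order_eq_zero_iff_isUnit.2 (hv.map κ), zero_add, nsmul_eq_mul, mul_comm]

theorem exists_algHom_lift_order_eq {k S B K : Type*} [CommRing k] [CommRing S] [CommRing B]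
    [Algebra k S] [Algebra k B] [Algebra S B] [IsScalarTower k S B] [Module.Finite S B]
    [FaithfulSMul S B] [Field K] [CharZero K] [Algebra k K] (ψ : S →ₐ[k] K⟦X⟧) :
    ∃ (φ : B →ₐ[k] (AlgebraicClosure K)⟦X⟧) (e : ℕ), e ≠ 0 ∧
      ∀ s, (φ (algebraMap S B s)).order = e * (ψ s).order := by
  let K' := AlgebraicClosure K
  have : CharZero K' := charZero_of_injective_algebraMap (algebraMap K K').injective
  have : Algebra.IsIntegral K' (ResidueField K'⟦X⟧) :=
    Algebra.isIntegral_of_surjective (surjective_algebraMap_residueField_powerSeries K')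
  let incl : K⟦X⟧ →ₐ[k] K'⟦X⟧ := PowerSeries.mapAlgHom (IsScalarTower.toAlgHom k K K')
  obtain ⟨φ, κ, κ_injective, hφ⟩ :=
    exists_ringHom_lift_to_powerSeries K' (B := B) ((incl.comp ψ : S →ₐ[k] K'⟦X⟧) : S →+* K'⟦X⟧)
  have := isLocalHom_algHom_powerSeries κ
  let κ' : K⟦X⟧ →+* K'⟦X⟧ := (κ : K'⟦X⟧ →+* K'⟦X⟧).comp incl
  have κ'_X : κ' PowerSeries.X = κ PowerSeries.X :=
    congrArg κ (PowerSeries.map_X (algebraMap K K'))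
  have order_ne_zero : (κ' PowerSeries.X).order ≠ 0 := by
    rw [κ'_X, ne_eq, order_eq_zero_iff_isUnit]
    exact fun h => PowerSeries.X_prime.not_isUnit (isUnit_of_map_unit κ _ h)
  have order_ne_top : (κ' PowerSeries.X).order ≠ ⊤ := by
    rw [κ'_X, ne_eq, PowerSeries.order_eq_top, map_eq_zero_iff κ κ_injective]
    exact PowerSeries.X_ne_zero
  lift (κ' PowerSeries.X).order to ℕ using order_ne_top with e he
  have map_scalar (c : k) : φ (algebraMap k B c) = algebraMap k K'⟦X⟧ c := by
    rw [IsScalarTower.algebraMap_apply k S B, hφ]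
    change κ ((incl.comp ψ) (algebraMap k S c)) = _
    rw [AlgHom.commutes, IsScalarTower.algebraMap_apply k K' K'⟦X⟧, κ.commutes]
  refine ⟨{ φ with commutes' := map_scalar }, e, by exact_mod_cast order_ne_zero, fun s => ?_⟩
  rw [he, ← order_map_powerSeries κ' (he ▸ order_ne_zero)]
  exact congrArg PowerSeries.order (hφ s)

end Order

section ReesOrder

variable {K : Type*} [CommRing K]

theorem mem_tId_pow_iff {f : K⟦X⟧} {n : ℕ} : f ∈ tId K ^ n ↔ (n : ℕ∞) ≤ f.order := by
  rw [tId, Ideal.span_singleton_pow, Ideal.mem_span_singleton, PowerSeries.X_pow_dvd_iff]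
  exact ⟨PowerSeries.nat_le_order f n, fun h i hi =>
    PowerSeries.coeff_of_lt_order i (lt_of_lt_of_le (Nat.cast_lt.2 hi) h)⟩

theorem adicOrder_tId_eq {f : K⟦X⟧} {n : ℕ} (hf : f.order = n) : adicOrder (tId K) f = n := by
  have setOf_eq : {i : ℕ | f ∈ tId K ^ i} = Set.Iic n := Set.ext fun i =>
    mem_tId_pow_iff.trans (by rw [hf, Nat.cast_le, Set.mem_Iic])
  rw [adicOrder, setOf_eq, csSup_Iic]

theorem coe_adicOrder_tId {f : K⟦X⟧} (hf : f ≠ 0) : (adicOrder (tId K) f : ℕ∞) = f.order := by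
  obtain ⟨n, hn⟩ := ENat.ne_top_iff_exists.1 (mt PowerSeries.order_eq_top.1 hf)
  rw [adicOrder_tId_eq hn.symm, hn]

/-- The Rees algebra of slope `c` over `K⟦t⟧`, whose part of degree `n` consists of the power
series of order at least `c * n`. A Rees algebra has order at least `c` exactly when it lies in
`slopeAlg c`. -/
def slopeAlg (c : ℝ≥0∞) : Subalgebra K⟦X⟧ K⟦X⟧[X] where
  carrier := {p | ∀ n : ℕ, c * n ≤ ((p.coeff n).order : ℝ≥0∞)}
  add_mem' {p q} hp hq n := by
    rw [coeff_add]
    refine (le_min (hp n) (hq n)).trans ?_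
    rw [← ENat.toENNReal_min]
    exact ENat.toENNReal_mono (PowerSeries.min_order_le_order_add _ _)
  mul_mem' {p q} hp hq n := by
    rw [coeff_mul]
    refine Finset.sum_induction _ (fun f : K⟦X⟧ => c * n ≤ (f.order : ℝ≥0∞)) ?_ (by simp) ?_
    · intro a b ha hb
      refine (le_min ha hb).trans ?_
      rw [← ENat.toENNReal_min]
      exact ENat.toENNReal_mono (PowerSeries.min_order_le_order_add a b)
    · intro x hx
      calc c * n = c * x.1 + c * x.2 := by
            rw [← Finset.HasAntidiagonal.mem_antidiagonal.1 hx, Nat.cast_add, mul_add]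
        _ ≤ ((p.coeff x.1).order : ℝ≥0∞) + ((q.coeff x.2).order : ℝ≥0∞) :=
            add_le_add (hp _) (hq _)
        _ ≤ ((p.coeff x.1 * q.coeff x.2).order : ℝ≥0∞) := by
            rw [← ENat.toENNReal_add]
            exact ENat.toENNReal_mono (PowerSeries.le_order_mul _ _)
  algebraMap_mem' f n := by
    rw [Polynomial.algebraMap_apply, coeff_C]
    split_ifs with hn <;> simp [hn]

theorem C_mul_X_pow_mem_slopeAlg_iff {c : ℝ≥0∞} {f : K⟦X⟧} {l : ℕ} :
    C f * X ^ l ∈ slopeAlg c ↔ c * l ≤ (f.order : ℝ≥0∞) := by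
  refine ⟨fun h => by simpa using h l, fun h n => ?_⟩
  rw [coeff_C_mul_X_pow]
  split_ifs with hn <;> simp [hn, h]

theorem le_reesOrder_arcImage_iff {R : Type*} [CommRing R] {ψ : R → K⟦X⟧}
    {G : Subalgebra R R[X]} {c : ℝ≥0∞} :
    c ≤ reesOrder (tId K) (arcImage ψ G) ↔
      ∀ (g : R) (l : ℕ), C g * X ^ l ∈ G → c * l ≤ ((ψ g).order : ℝ≥0∞) := by
  have le_adicOrder_div_iff {f : K⟦X⟧} {l : ℕ} (hf : f ≠ 0) (hl : l ≠ 0) :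
      c ≤ (adicOrder (tId K) f : ℝ≥0∞) / l ↔ c * l ≤ (f.order : ℝ≥0∞) := by
    rw [ENNReal.le_div_iff_mul_le (.inl (Nat.cast_ne_zero.2 hl))
      (.inl (ENNReal.natCast_ne_top l)), ← coe_adicOrder_tId hf, ENat.toENNReal_coe]
  constructor
  · intro h g l hg
    rcases eq_or_ne (ψ g) 0 with hψ | hψ
    · simp [hψ]
    rcases eq_or_ne l 0 with rfl | hl
    · simp
    · exact (le_adicOrder_div_iff hψ hl).1 <| h.trans <| sInf_le
        ⟨ψ g, l, hψ, Nat.one_le_iff_ne_zero.2 hl, Algebra.subset_adjoin ⟨g, l, hg, hψ, rfl⟩, rfl⟩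
  · intro h
    have arcImage_le : arcImage ψ G ≤ slopeAlg c := Algebra.adjoin_le <| by
      rintro _ ⟨g, l, hg, -, rfl⟩
      exact C_mul_X_pow_mem_slopeAlg_iff.2 (h g l hg)
    refine le_sInf ?_
    rintro _ ⟨f, l, hf, hl, hmem, rfl⟩
    exact (le_adicOrder_div_iff hf (Nat.one_le_iff_ne_zero.1 hl)).2
      (C_mul_X_pow_mem_slopeAlg_iff.1 (arcImage_le hmem))

theorem reesOrder_arcImage_eq_mul {R K' : Type*} [CommRing R] [CommRing K'] {ψ : R → K⟦X⟧}
    {φ : R → K'⟦X⟧} {e : ℕ} (he : e ≠ 0) (h : ∀ s, (φ s).order = e * (ψ s).order)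
    (G : Subalgebra R R[X]) :
    reesOrder (tId K') (arcImage φ G) = e * reesOrder (tId K) (arcImage ψ G) := by
  have he' : (e : ℝ≥0∞) ≠ 0 := Nat.cast_ne_zero.2 he
  have he_top : (e : ℝ≥0∞) ≠ ⊤ := ENNReal.natCast_ne_top e
  refine eq_of_forall_le_iff fun c => ?_
  rw [mul_comm, ← ENNReal.div_le_iff he' he_top, le_reesOrder_arcImage_iff,
    le_reesOrder_arcImage_iff]
  refine forall₃_congr fun g l _ => ?_
  rw [h, ENat.toENNReal_mul, ENat.toENNReal_coe, ← ENNReal.mul_div_right_comm,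
    ENNReal.div_le_iff' he' he_top]

theorem homOrd_span_range_eq {R ι : Type*} [CommRing R] [Nonempty ι] {f : R →+* K⟦X⟧}
    {z : ι → R} {n : ℕ} (h : ∀ j, (f (z j)).order = n) :
    homOrd (Ideal.span (Set.range z)) (tId K) f = n := by
  have map_mem_iff (i : ℕ) :
      (∀ s ∈ Ideal.span (Set.range z), f s ∈ tId K ^ i) ↔ i ≤ n := by
    change Ideal.span (Set.range z) ≤ (tId K ^ i).comap f ↔ _
    simp only [Ideal.span_le, Set.range_subset_iff, SetLike.mem_coe, Ideal.mem_comap,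
      mem_tId_pow_iff, h, Nat.cast_le, forall_const]
  rw [homOrd, Set.ext map_mem_iff]
  exact csSup_Iic

end ReesOrder

section MaximalIdeal

theorem mPoly_le_span_range_X (k : Type) [Field k] (d : ℕ) :
    mPoly k d ≤ Ideal.span (Set.range MvPolynomial.X) := by
  intro p hp
  have constantCoeff_eq_zero : MvPolynomial.constantCoeff p = 0 :=
    (MvPolynomial.aeval_zero' p).symm.trans hp
  rw [← Set.image_univ, MvPolynomial.mem_ideal_span_X_image]
  intro m hm
  have m_ne_zero : m ≠ 0 := by
    rintro rfl
    exact MvPolynomial.mem_support_iff.1 hm constantCoeff_eq_zero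
  simpa using Finsupp.ne_iff.1 m_ne_zero

theorem mS_eq_span_range_zvar (k : Type) [Field k] (d : ℕ) (S : Type) [CommRing S]
    [Algebra (MvPolynomial (Fin d) k) S] :
    mS k d S = Ideal.span (Set.range (zvar k d S)) := by
  have mPoly_eq : mPoly k d = Ideal.span (Set.range MvPolynomial.X) := by
    refine (mPoly_le_span_range_X k d).antisymm (Ideal.span_le.2 ?_)
    rintro _ ⟨j, rfl⟩
    exact MvPolynomial.aeval_X _ j
  rw [mS, mPoly_eq, Ideal.map_span, ← Set.range_comp]
  rfl

theorem pow_mem_map_of_aeval_minPolyOf_eq_zero {S B : Type*} [CommRing S] [CommRing B]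
    [Algebra S B] {J : Ideal S} {b : ℕ} {Bc : ℕ → S} (hBc : ∀ j < b - 1, Bc j ∈ J) {x : B}
    (hx : aeval x (minPolyOf b Bc) = 0) : x ^ b ∈ J.map (algebraMap S B) := by
  rw [minPolyOf, map_add, map_pow, aeval_X] at hx
  rw [eq_neg_of_add_eq_zero_left hx, map_sum]
  refine neg_mem (sum_mem fun j hj => ?_)
  rw [map_mul, aeval_C]
  exact Ideal.mul_mem_right _ _ (Ideal.mem_map_of_mem _ (hBc j (Finset.mem_range.1 hj)))

theorem theta_mem_radical {k : Type} [Field k] {d : ℕ} {S : Type} [CommRing S] [IsDomain S]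
    [Algebra (MvPolynomial (Fin d) k) S] (P : Presentation k d S) (i : Fin P.e) :
    theta P i ∈ ((mS k d S).map (algebraMap S (BRing P))).radical := by
  refine ⟨P.b i, pow_mem_map_of_aeval_minPolyOf_eq_zero (fun j hj => ?_) (P.hroot i)⟩
  have hb := P.hb i
  exact Ideal.pow_le_self (by omega) (P.hmem i j (by omega))

end MaximalIdeal

universe w

theorem lift_of_diagonal_generic_arc_general {k S B ι : Type*} {K : Type w} [CommRing k]
    [CommRing S] [CommRing B] [Algebra k S] [Algebra k B] [Algebra S B] [IsScalarTower k S B]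
    [Module.Finite S B] [FaithfulSMul S B] [Field K] [CharZero K] [Algebra k K] [Nonempty ι]
    {m : Ideal S} {z : ι → S} (hm : m = Ideal.span (Set.range z)) (G : Subalgebra S S[X])
    (ψ : S →ₐ[k] K⟦X⟧) (u : ι → K⟦X⟧) (hu : ∀ j, IsUnit (u j)) (α : ℕ) (hα : 1 ≤ α)
    (hψz : ∀ j, ψ (z j) = u j * PowerSeries.X ^ α)
    (hgen : reesOrder (tId K) (arcImage ψ G) = α * reesOrder m G) :
    ∃ (K' : Type w) (_ : Field K') (_ : Algebra k K') (φ : B →ₐ[k] K'⟦X⟧),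
      (∀ b ∈ (m.map (algebraMap S B)).radical, φ b ∈ tId K') ∧
      (∀ s, φ (algebraMap S B s) = 0 ↔ ψ s = 0) ∧
      (∃ (g' : K'⟦X⟧) (u' : ι → K'⟦X⟧), g' ≠ 0 ∧ 1 ≤ tOrd g' ∧ (∀ j, IsUnit (u' j)) ∧
        ∀ j, φ (algebraMap S B (z j)) = u' j * g') ∧
      reesOrder (tId K') (arcImage (fun s => φ (algebraMap S B s)) G) =
        homOrd m (tId K') (fun s => φ (algebraMap S B s)) * reesOrder m G := by
  obtain ⟨φ, e, he, hφ⟩ := exists_algHom_lift_order_eq (B := B) ψ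
  have heα : e * α ≠ 0 := Nat.mul_ne_zero he (Nat.one_le_iff_ne_zero.1 hα)
  have order_z (j : ι) : (φ (algebraMap S B (z j))).order = ↑(e * α) := by
    rw [hφ, hψz, order_mul_X_pow (hu j), Nat.cast_mul]
  have homOrd_eq : homOrd m (tId _) (fun s => φ (algebraMap S B s)) = e * α :=
    hm ▸ homOrd_span_range_eq (f := (φ : B →+* (AlgebraicClosure K)⟦X⟧).comp (algebraMap S B))
      order_z
  choose u' hu' hz using fun j => exists_isUnit_mul_X_pow_of_order_eq (order_z j)
  refine ⟨AlgebraicClosure K, inferInstance, inferInstance, φ, ?_, fun s => ?_,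
    ⟨PowerSeries.X ^ (e * α), u', pow_ne_zero _ PowerSeries.X_ne_zero, ?_, hu', hz⟩, ?_⟩
  · have tId_isPrime : (tId (AlgebraicClosure K)).IsPrime := PowerSeries.span_X_isPrime
    refine (tId_isPrime.comap φ).radical_le_iff.2 (Ideal.map_le_iff_le_comap.2 ?_)
    rw [hm, Ideal.span_le]
    rintro _ ⟨j, rfl⟩
    rw [SetLike.mem_coe, Ideal.mem_comap, Ideal.mem_comap, hz]
    exact Ideal.mul_mem_left _ _ <|
      Ideal.pow_mem_of_mem _ (Ideal.mem_span_singleton_self _) _ (Nat.pos_of_ne_zero heα)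
  · have mul_injective : Function.Injective ((e : ℕ∞) * ·) :=
      (ENat.mul_right_strictMono (Nat.cast_ne_zero.2 he) (ENat.natCast_ne_top e)).injective
    rw [← PowerSeries.order_eq_top, ← PowerSeries.order_eq_top, hφ]
    simpa only [ENat.mul_top (Nat.cast_ne_zero.2 he)] using mul_injective.eq_iff (b := ⊤)
  · rw [tOrd, adicOrder_tId_eq (PowerSeries.order_X_pow _)]
    exact Nat.one_le_iff_ne_zero.2 heα
  · rw [reesOrder_arcImage_eq_mul he hφ, hgen, homOrd_eq, Nat.cast_mul, mul_assoc]

end Development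

/-- (Lemma `lemma:lifting_arcs`.)  Let `ψ̄ : S → K⟦t⟧` be a diagonal arc
(`ψ̄(z_j) = u_j t^α` with `u_j` units, `α ≥ 1`) which is diagonal-generic for the
elimination algebra `G_X^{(d)}`, i.e. `ord(ψ̄(G_X^{(d)})) = α · ord(G_X^{(d)})`.  Then
there are a field extension `K' ⊇ k` and a (nonzero) `k`-algebra homomorphism
`φ : B → K'⟦t⟧`, sending the maximal ideal of `B` into `(t)`, whose restriction
`φ^{(d)}` to `S` has the same kernel as `ψ̄`; moreover `φ^{(d)}` is again diagonal
(`φ^{(d)}(z_j) = u'_j g'(t)` for units `u'_j` and a common `g'` of positive order) and is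
diagonal-generic for `G_X^{(d)}`: `ord(φ^{(d)}(G_X^{(d)})) = ord(φ^{(d)}) · ord(G_X^{(d)})`. -/
theorem lift_of_diagonal_generic_arc
    (k : Type) [Field k] [CharZero k] (d : ℕ) (hd : 1 ≤ d)
    (S : Type) [CommRing S] [IsDomain S] [Algebra (MvPolynomial (Fin d) k) S]
    [Algebra k S] [IsScalarTower k (MvPolynomial (Fin d) k) S] [IsSLoc k d S]
    (D : Fin d → Derivation k S S)
    (hD : ∀ i j : Fin d, D j (zvar k d S i) = if i = j then 1 else 0)
    (P : Presentation k d S)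
    (K : Type) [Field K] [Algebra k K]
    (ψ : S →ₐ[k] PowerSeries K)
    (u : Fin d → PowerSeries K) (hu : ∀ j, IsUnit (u j))
    (α : ℕ) (hα : 1 ≤ α)
    (hψz : ∀ j, ψ (zvar k d S j) = u j * PowerSeries.X ^ α)
    (hgen : reesOrder (tId K) (arcImage (⇑ψ) (elimAlg P D)) =
      (α : ℝ≥0∞) * reesOrder (mS k d S) (elimAlg P D)) :
    ∃ (K' : Type) (_ : Field K') (_ : Algebra k K')
      (φ : BRing P →ₐ[k] PowerSeries K'),
      (∀ s ∈ mS k d S, φ (algebraMap S (BRing P) s) ∈ tId K') ∧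
      (∀ i, φ (theta P i) ∈ tId K') ∧
      (∀ s : S, φ (algebraMap S (BRing P) s) = 0 ↔ ψ s = 0) ∧
      (∃ (g' : PowerSeries K') (u' : Fin d → PowerSeries K'),
        g' ≠ 0 ∧ 1 ≤ tOrd g' ∧ (∀ j, IsUnit (u' j)) ∧
        ∀ j, φ (algebraMap S (BRing P) (zvar k d S j)) = u' j * g') ∧
      reesOrder (tId K')
          (arcImage (fun s : S => φ (algebraMap S (BRing P) s)) (elimAlg P D)) =
        (homOrd (mS k d S) (tId K')
            (fun s : S => φ (algebraMap S (BRing P) s)) : ℝ≥0∞) *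
          reesOrder (mS k d S) (elimAlg P D) := by
  have : CharZero K := charZero_of_injective_algebraMap (algebraMap k K).injective
  have : Nonempty (Fin d) := Fin.pos_iff_nonempty.1 hd
  have := P.hfinite
  have : FaithfulSMul S (BRing P) := (faithfulSMul_iff_algebraMap_injective ..).2 P.hinj
  obtain ⟨K', fieldK', algebraK', φ, hm, hφ⟩ := lift_of_diagonal_generic_arc_general
    (B := BRing P) (mS_eq_span_range_zvar k d S) (elimAlg P D) ψ u hu α hα hψz hgen
  exact ⟨K', fieldK', algebraK', φ,
    fun s hs => hm _ (Ideal.le_radical (Ideal.mem_map_of_mem _ hs)),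
    fun i => hm _ (theta_mem_radical P i), hφ⟩

end NashMult
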